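/- Let M be an R-module of finite Gorenstein weak injective dimension. Then Gwid_R(M) ≤ n if and only if Ext^i_R(W, M) = 0 for every weak injective module W and every i ≥ n + 1, if and only if for every exact sequence 0 → M → I^0 → ⋯ → I^{n−1} → C^n → 0 with each I^i injective, the cokernel C^n is Gorenstein weak injective. -/

import Mathlib

open CategoryTheory

universe u

noncomputable section

variable (R : Type u) [Ring R]

/-- Vanishing of `Ext^n_R(N, M)` for left `R`-modules, expressed via the `Ext` bifunctor
on the `ℤ`-linear abelian category `ModuleCat R`. -/
def ExtVanish (n : ℕ) (N M : ModuleCat.{u} R) : Prop :=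
  Subsingleton (((_root_.Ext ℤ (ModuleCat.{u} R) n).obj (Opposite.op N)).obj M)

/-- An `R`-module is super finitely presented if it admits a resolution by
finitely generated projective modules. -/
def SuperFinitelyPresented (N : ModuleCat.{u} R) : Prop :=
  ∃ (F : ℕ → ModuleCat.{u} R) (d : ∀ n, F (n + 1) →ₗ[R] F n) (ε : F 0 →ₗ[R] N),
    (∀ n, Module.Finite R (F n)) ∧ (∀ n, Module.Projective R (F n)) ∧
    Function.Surjective ε ∧ Function.Exact (d 0) ε ∧
    (∀ n, Function.Exact (d (n + 1)) (d n))

/-- An `R`-module `W` is weak injective if `Ext^1_R(N, W) = 0` for every super finitely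
presented module `N`. -/
def WeakInjective (W : ModuleCat.{u} R) : Prop :=
  ∀ N : ModuleCat.{u} R, SuperFinitelyPresented R N → ExtVanish R 1 N W

/-- `wid_R M ≤ n` : `Ext^{n+1}_R(N, M) = 0` for every super finitely presented `N`. -/
def WidLE (M : ModuleCat.{u} R) (n : ℕ) : Prop :=
  ∀ N : ModuleCat.{u} R, SuperFinitelyPresented R N → ExtVanish R (n + 1) N M

/-- The weak injective dimension, as an element of `ℕ∞`. -/
def Wid (M : ModuleCat.{u} R) : ℕ∞ :=
  sInf {c : ℕ∞ | ∃ n : ℕ, c = n ∧ WidLE R M n}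

/-- A doubly infinite exact complex of injective modules which stays exact after applying
`Hom_R(W, -)` for every module `W` in the test class `𝒯`. -/
def IsTotallyAcyclicInjComplex (𝒯 : ModuleCat.{u} R → Prop)
    (I : ℤ → ModuleCat.{u} R) (d : ∀ n : ℤ, I n →ₗ[R] I (n + 1)) : Prop :=
  (∀ n, Module.Injective R (I n)) ∧
  (∀ n, Function.Exact (d n) (d (n + 1))) ∧
  (∀ W : ModuleCat.{u} R, 𝒯 W → ∀ n,
    Function.Exact (fun g : W →ₗ[R] I n => (d n).comp g)
      (fun g : W →ₗ[R] I (n + 1) => (d (n + 1)).comp g))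

/-- `M` is Gorenstein injective relative to the test class `𝒯` : `M` is the cokernel
`Coker (I_1 → I_0)` of a `Hom(𝒯, -)`-exact exact complex of injective modules. -/
def GorensteinRelInjective (𝒯 : ModuleCat.{u} R → Prop) (M : ModuleCat.{u} R) : Prop :=
  ∃ (I : ℤ → ModuleCat.{u} R) (d : ∀ n : ℤ, I n →ₗ[R] I (n + 1)) (π : I 0 →ₗ[R] M),
    IsTotallyAcyclicInjComplex R 𝒯 I d ∧
    Function.Surjective π ∧ Function.Exact (d (-1)) π

/-- Gorenstein weak injective modules: the test class is that of weak injective modules. -/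
def GorensteinWeakInjective (M : ModuleCat.{u} R) : Prop :=
  GorensteinRelInjective R (WeakInjective R) M

/-- Gorenstein injective modules: the test class is that of injective modules. -/
def GorensteinInjective (M : ModuleCat.{u} R) : Prop :=
  GorensteinRelInjective R (fun E => Module.Injective R E) M

/-- The data of an exact sequence `0 → M → G^0 → ⋯ → G^n → 0` (the modules `G^i` for
`i > n` being trivial). -/
def IsFiniteCoresolution (M : ModuleCat.{u} R) (n : ℕ) (G : ℕ → ModuleCat.{u} R)
    (d : ∀ i, G i →ₗ[R] G (i + 1)) (ε : M →ₗ[R] G 0) : Prop :=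
  Function.Injective ε ∧ Function.Exact ε (d 0) ∧
  (∀ i, Function.Exact (d i) (d (i + 1))) ∧
  (∀ i, n < i → ∀ x : G i, x = 0)

/-- `Gwid_R M ≤ n` : `M` has a coresolution of length `n` by Gorenstein weak injective
modules. -/
def GwidLE (M : ModuleCat.{u} R) (n : ℕ) : Prop :=
  ∃ (G : ℕ → ModuleCat.{u} R) (d : ∀ i, G i →ₗ[R] G (i + 1)) (ε : M →ₗ[R] G 0),
    IsFiniteCoresolution R M n G d ε ∧ ∀ i, GorensteinWeakInjective R (G i)

/-- The Gorenstein weak injective dimension, as an element of `ℕ∞`. -/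
def Gwid (M : ModuleCat.{u} R) : ℕ∞ :=
  sInf {c : ℕ∞ | ∃ n : ℕ, c = n ∧ GwidLE R M n}

/-- `Gid_R M ≤ n`, via coresolutions by Gorenstein injective modules. -/
def GidLE (M : ModuleCat.{u} R) (n : ℕ) : Prop :=
  ∃ (G : ℕ → ModuleCat.{u} R) (d : ∀ i, G i →ₗ[R] G (i + 1)) (ε : M →ₗ[R] G 0),
    IsFiniteCoresolution R M n G d ε ∧ ∀ i, GorensteinInjective R (G i)

/-- The Gorenstein injective dimension, as an element of `ℕ∞`. -/
def Gid (M : ModuleCat.{u} R) : ℕ∞ :=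
  sInf {c : ℕ∞ | ∃ n : ℕ, c = n ∧ GidLE R M n}

/-- `id_R M ≤ n`, via coresolutions by injective modules. -/
def IdLE (M : ModuleCat.{u} R) (n : ℕ) : Prop :=
  ∃ (G : ℕ → ModuleCat.{u} R) (d : ∀ i, G i →ₗ[R] G (i + 1)) (ε : M →ₗ[R] G 0),
    IsFiniteCoresolution R M n G d ε ∧ ∀ i, Module.Injective R (G i)

/-- The injective dimension, as an element of `ℕ∞`. -/
def Idim (M : ModuleCat.{u} R) : ℕ∞ :=
  sInf {c : ℕ∞ | ∃ n : ℕ, c = n ∧ IdLE R M n}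

/-- The data of an exact sequence `0 → P_n → ⋯ → P_0 → M → 0`. -/
def IsFiniteResolution (M : ModuleCat.{u} R) (n : ℕ) (P : ℕ → ModuleCat.{u} R)
    (d : ∀ i, P (i + 1) →ₗ[R] P i) (ε : P 0 →ₗ[R] M) : Prop :=
  Function.Surjective ε ∧ Function.Exact (d 0) ε ∧
  (∀ i, Function.Exact (d (i + 1)) (d i)) ∧
  (∀ i, n < i → ∀ x : P i, x = 0)

/-- `pd_R M ≤ n`, via resolutions by projective modules. -/
def PdLE (M : ModuleCat.{u} R) (n : ℕ) : Prop :=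
  ∃ (P : ℕ → ModuleCat.{u} R) (d : ∀ i, P (i + 1) →ₗ[R] P i) (ε : P 0 →ₗ[R] M),
    IsFiniteResolution R M n P d ε ∧ ∀ i, Module.Projective R (P i)

end

variable (R : Type u) [Ring R]

/-- A short exact sequence `0 → L → M → N → 0` of `R`-modules. -/
def ShortExactSeq (L M N : ModuleCat.{u} R) (f : L →ₗ[R] M) (g : M →ₗ[R] N) : Prop :=
  Function.Injective f ∧ Function.Surjective g ∧ Function.Exact f g

/-- Exactness of `0 → Hom(C, X) → Hom(B, X) → Hom(A, X) → 0` induced by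
`0 → A → B → C → 0`. -/
def HomContraExact (X : ModuleCat.{u} R) {A B C : ModuleCat.{u} R}
    (f : A →ₗ[R] B) (g : B →ₗ[R] C) : Prop :=
  Function.Injective (fun h : C →ₗ[R] X => h.comp g) ∧
  Function.Exact (fun h : C →ₗ[R] X => h.comp g) (fun h : B →ₗ[R] X => h.comp f) ∧
  Function.Surjective (fun h : B →ₗ[R] X => h.comp f)

/-- A short exact sequence is `GWI`-copure exact if `Hom_R(-, X)` leaves it exact for
every Gorenstein weak injective module `X`. -/
def GWICopureExact {A B C : ModuleCat.{u} R} (f : A →ₗ[R] B) (g : B →ₗ[R] C) : Prop :=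
  ShortExactSeq R A B C f g ∧
  ∀ X : ModuleCat.{u} R, GorensteinWeakInjective R X → HomContraExact R X f g

/-- `M` is `GWI`-copure injective if `Hom_R(-, M)` is exact on every `GWI`-copure exact
sequence. -/
def GWICopureInjectiveMod (M : ModuleCat.{u} R) : Prop :=
  ∀ (A B C : ModuleCat.{u} R) (f : A →ₗ[R] B) (g : B →ₗ[R] C),
    GWICopureExact R f g → HomContraExact R M f g

/-- `φ : M → G` is a Gorenstein weak injective preenvelope of `M`. -/
def GWIPreenvelope (M G : ModuleCat.{u} R) (φ : M →ₗ[R] G) : Prop :=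
  GorensteinWeakInjective R G ∧
  ∀ G' : ModuleCat.{u} R, GorensteinWeakInjective R G' →
    ∀ f : M →ₗ[R] G', ∃ g : G →ₗ[R] G', g.comp φ = f

/-- A `WI`-pure Tate injective resolution of `M` : an injective resolution
`0 → M → E^0 → E^1 → ⋯`, a `WI`-pure exact complex `T` of injectives, and a chain map
`u : E → T` which is an isomorphism in all sufficiently large degrees. -/
def WIPureTateInjectiveResolution (M : ModuleCat.{u} R)
    (E : ℕ → ModuleCat.{u} R) (dE : ∀ n, E n →ₗ[R] E (n + 1)) (ε : M →ₗ[R] E 0)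
    (T : ℤ → ModuleCat.{u} R) (dT : ∀ n : ℤ, T n →ₗ[R] T (n + 1))
    (u : ∀ n : ℕ, E n →ₗ[R] T n) : Prop :=
  (∀ n, Module.Injective R (E n)) ∧ Function.Injective ε ∧
  Function.Exact ε (dE 0) ∧ (∀ n, Function.Exact (dE n) (dE (n + 1))) ∧
  IsTotallyAcyclicInjComplex R (WeakInjective R) T dT ∧
  (∀ n : ℕ, (dT n).comp (u n) = (u (n + 1)).comp (dE n)) ∧
  ∃ N : ℕ, ∀ n, N ≤ n → Function.Bijective (u n)

/-- Vanishing of the relative Tate cohomology `Êxt^i_GWI(N, M)` for all `i ∈ ℤ`,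
computed from the `WI`-pure exact complex `T` : the complex `Hom_R(N, T)` is exact. -/
def ExtHatVanishesAll (N : ModuleCat.{u} R) (T : ℤ → ModuleCat.{u} R)
    (dT : ∀ n : ℤ, T n →ₗ[R] T (n + 1)) : Prop :=
  ∀ n : ℤ, Function.Exact (fun g : N →ₗ[R] T n => (dT n).comp g)
    (fun g : N →ₗ[R] T (n + 1) => (dT (n + 1)).comp g)

/-! Let `𝒯` be a test class containing the injectives. Gorenstein injectivity relative to `𝒯` only
depends on which short exact sequences exist: it amounts to the vanishing of `Ext^{≥1}(𝒯, -)`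
together with the possibility of continuing to the left by injectives, and is therefore treated
coinductively. The key closure property is the one under extensions, a horseshoe argument carried
out with pullbacks: a sequence `0 → X → P → J → 0` with `J` injective and `X` Gorenstein injective
splits, since `Ext^1(J, X) = 0`, so its outer terms may be exchanged.

Replacing the Gorenstein injectives in a coresolution of `M` by injectives one step at a time, one
sees that the `n`-th injective cosyzygy `X` of `M` still has finite Gorenstein dimension. Dimension
shifting turns `Ext^{>n}(𝒯, M) = 0` into `Ext^{>0}(𝒯, X) = 0`, and for an object of finite
Gorenstein dimension this vanishing forces Gorenstein injectivity: its finite coresolution is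
shortened from the right, because Gorenstein injectives are closed under those kernels of
epimorphisms whose `Ext^{>0}(𝒯, -)` vanishes.
-/

open Limits ZeroObject

universe w

section Lifting

variable {𝒜 : Type*} [Category* 𝒜] [Abelian 𝒜] [HasExt.{w} 𝒜] {S : ShortComplex 𝒜} {T : 𝒜}

theorem exists_lift_of_subsingleton_ext (hS : S.ShortExact)
    (hT : Subsingleton (Abelian.Ext.{w} T S.X₁ 1)) (φ : T ⟶ S.X₃) :
    ∃ ψ : T ⟶ S.X₂, ψ ≫ S.g = φ := by
  obtain ⟨y, hy⟩ := Abelian.Ext.covariant_sequence_exact₃ T hS (Abelian.Ext.mk₀ φ) rfl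
    (hT.elim _ _)
  obtain ⟨ψ, rfl⟩ := (Abelian.Ext.mk₀_bijective T S.X₂).2 y
  rw [Abelian.Ext.mk₀_comp_mk₀] at hy
  exact ⟨ψ, (Abelian.Ext.mk₀_bijective T S.X₃).1 hy⟩

theorem subsingleton_ext_one_of_forall_lift (hS : S.ShortExact)
    (hT : Subsingleton (Abelian.Ext.{w} T S.X₂ 1))
    (lift : ∀ φ : T ⟶ S.X₃, ∃ ψ : T ⟶ S.X₂, ψ ≫ S.g = φ) :
    Subsingleton (Abelian.Ext.{w} T S.X₁ 1) := by
  refine subsingleton_of_forall_eq 0 fun x => ?_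
  obtain ⟨y, rfl⟩ := Abelian.Ext.covariant_sequence_exact₁ T hS x (hT.elim _ _) (n₀ := 0) rfl
  obtain ⟨φ, rfl⟩ := (Abelian.Ext.mk₀_bijective T S.X₃).2 y
  obtain ⟨ψ, rfl⟩ := lift φ
  rw [← Abelian.Ext.mk₀_comp_mk₀_assoc, hS.comp_extClass, Abelian.Ext.comp_zero]

theorem subsingleton_ext_of_injective (T I : 𝒜) [Injective I] (n : ℕ) :
    Subsingleton (Abelian.Ext.{w} T I (n + 1)) :=
  subsingleton_of_forall_eq 0 Abelian.Ext.eq_zero_of_injective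

end Lifting

/-- `B` is an extension of `C` by `A`. Only the existence of a short exact sequence
`0 → A → B → C → 0` is recorded, since none of the arguments below depends on its maps. -/
def IsExtension {𝒜 : Type*} [Category* 𝒜] [Abelian 𝒜] (A B C : 𝒜) : Prop :=
  ∃ (f : A ⟶ B) (g : B ⟶ C) (w : f ≫ g = 0), (ShortComplex.mk f g w).ShortExact

namespace IsExtension

section ThreeByThree

variable {𝒜 : Type*} [Category* 𝒜] [Abelian 𝒜] {A B C D E I J K : 𝒜}

theorem op (h : IsExtension A B C) :
    IsExtension (Opposite.op C) (Opposite.op B) (Opposite.op A) := by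
  obtain ⟨f, g, w, hS⟩ := h
  exact ⟨g.op, f.op, _, hS.op⟩

theorem unop {A B C : 𝒜ᵒᵖ} (h : IsExtension A B C) :
    IsExtension C.unop B.unop A.unop := by
  obtain ⟨f, g, w, hS⟩ := h
  exact ⟨g.unop, f.unop, _, hS.unop⟩

theorem of_iso (e : B ≅ C) : IsExtension 0 B C :=
  ⟨0, e.hom, zero_comp,
    (ShortComplex.Splitting.ofIsZeroOfIsIso _ (isZero_zero 𝒜) inferInstance).shortExact⟩

theorem of_forall_lift {f : A ⟶ B} {g : B ⟶ C} [Mono f] [Epi g] (w : f ≫ g = 0)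
    (lift : ∀ {T : 𝒜} (k : T ⟶ B), k ≫ g = 0 → ∃ l : T ⟶ A, l ≫ f = k) :
    IsExtension A B C :=
  ⟨f, g, w,
    { exact := ShortComplex.exact_of_f_is_kernel _ <|
        KernelFork.IsLimit.ofι' f w fun k hk => ⟨_, (lift k hk).choose_spec⟩
      mono_f := inferInstance
      epi_g := inferInstance }⟩

theorem of_isPullback {f : A ⟶ B} {g : B ⟶ C} {w : f ≫ g = 0}
    (hS : (ShortComplex.mk f g w).ShortExact) {P : 𝒜} {q : P ⟶ B} {p : P ⟶ J} {h : J ⟶ C}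
    (sq : IsPullback q p g h) : IsExtension A P J := by
  have : Mono f := hS.mono_f
  have : Epi g := hS.epi_g
  have : Epi p := Abelian.epi_snd_of_isLimit g h sq.isLimit
  have hi : f ≫ g = (0 : A ⟶ J) ≫ h := by rw [w, zero_comp]
  have : Mono (sq.lift f 0 hi) := mono_of_mono_fac (sq.lift_fst f 0 hi)
  refine of_forall_lift (sq.lift_snd f 0 hi) fun k hk => ?_
  have hkg : (k ≫ q) ≫ g = 0 := by
    rw [Category.assoc, sq.w, ← Category.assoc, hk, zero_comp]
  refine ⟨hS.exact.lift (k ≫ q) hkg, sq.hom_ext ?_ ?_⟩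
  · rw [Category.assoc, sq.lift_fst]
    exact hS.exact.lift_f _ hkg
  · rw [Category.assoc, sq.lift_snd, comp_zero, hk]

theorem exists_pullback (h : IsExtension A B C) (k : IsExtension K J C) :
    ∃ P, IsExtension A P J ∧ IsExtension K P B := by
  obtain ⟨f, g, w, hS⟩ := h
  obtain ⟨i, p, w', hT⟩ := k
  have sq := IsPullback.of_hasPullback g p
  exact ⟨_, of_isPullback hS sq, of_isPullback hT sq.flip⟩

theorem exists_kernel_comp (h : IsExtension A B C) (k : IsExtension K J B) :
    ∃ L, IsExtension L J C ∧ IsExtension K L A := by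
  obtain ⟨f, g, w, hS⟩ := h
  obtain ⟨i, q, w', hT⟩ := k
  have sq := IsPullback.of_hasPullback q f
  refine ⟨_, ?_, of_isPullback hT sq⟩
  have : Mono f := hS.mono_f
  have : Epi g := hS.epi_g
  have : Epi q := hT.epi_g
  refine of_forall_lift (f := pullback.fst q f) (g := q ≫ g) ?_ fun k hk => ?_
  · rw [← Category.assoc, sq.w, Category.assoc, w, comp_zero]
  · have hk' : (k ≫ q) ≫ g = 0 := by rw [Category.assoc, hk]
    exact ⟨sq.lift k (hS.exact.lift _ hk') (hS.exact.lift_f _ hk').symm, sq.lift_fst _ _ _⟩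

theorem exists_pushout (h : IsExtension A B C) (k : IsExtension A I K) :
    ∃ P, IsExtension B P K ∧ IsExtension I P C := by
  obtain ⟨P, hCPI, hKPB⟩ := h.op.exists_pullback k.op
  exact ⟨P.unop, hKPB.unop, hCPI.unop⟩

theorem exists_cokernel_comp (h : IsExtension A B C) (k : IsExtension B E D) :
    ∃ Q, IsExtension A E Q ∧ IsExtension C Q D := by
  obtain ⟨Q, hQEA, hDQC⟩ := h.op.exists_kernel_comp k.op
  exact ⟨Q.unop, hQEA.unop, hDQC.unop⟩

end ThreeByThree

section Ext

variable {𝒜 : Type*} [Category* 𝒜] [Abelian 𝒜] [HasExt.{w} 𝒜] {A B C T : 𝒜} {n : ℕ}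

theorem subsingleton_ext_left (h : IsExtension A B C)
    (hB : Subsingleton (Abelian.Ext.{w} T B (n + 1))) (hC : Subsingleton (Abelian.Ext.{w} T C n)) :
    Subsingleton (Abelian.Ext.{w} T A (n + 1)) := by
  obtain ⟨f, g, w, hS⟩ := h
  refine subsingleton_of_forall_eq 0 fun x => ?_
  obtain ⟨y, rfl⟩ := Abelian.Ext.covariant_sequence_exact₁ T hS x (hB.elim _ _) rfl
  rw [hC.elim y 0, Abelian.Ext.zero_comp]

theorem subsingleton_ext_middle (h : IsExtension A B C)
    (hA : Subsingleton (Abelian.Ext.{w} T A n)) (hC : Subsingleton (Abelian.Ext.{w} T C n)) :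
    Subsingleton (Abelian.Ext.{w} T B n) := by
  obtain ⟨f, g, w, hS⟩ := h
  refine subsingleton_of_forall_eq 0 fun x => ?_
  obtain ⟨y, rfl⟩ := Abelian.Ext.covariant_sequence_exact₂ T hS x (hC.elim _ _)
  rw [hA.elim y 0, Abelian.Ext.zero_comp]

theorem subsingleton_ext_right (h : IsExtension A B C)
    (hA : Subsingleton (Abelian.Ext.{w} T A (n + 1))) (hB : Subsingleton (Abelian.Ext.{w} T B n)) :
    Subsingleton (Abelian.Ext.{w} T C n) := by
  obtain ⟨f, g, w, hS⟩ := h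
  refine subsingleton_of_forall_eq 0 fun x => ?_
  obtain ⟨y, rfl⟩ := Abelian.Ext.covariant_sequence_exact₃ T hS x rfl (hA.elim _ _)
  rw [hB.elim y 0, Abelian.Ext.zero_comp]

theorem swap (h : IsExtension A B C) (hCA : Subsingleton (Abelian.Ext.{w} C A 1)) :
    IsExtension C B A := by
  obtain ⟨f, g, w, hS⟩ := h
  have : Mono f := hS.mono_f
  obtain ⟨σ, hσ⟩ := exists_lift_of_subsingleton_ext hS hCA (𝟙 C)
  let s := ShortComplex.Splitting.ofExactOfSection _ hS.exact σ hσ ‹_›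
  exact ⟨s.s, s.r, s.s_r,
    ShortComplex.Splitting.shortExact ⟨g, f, hσ, s.f_r, (add_comm _ _).trans s.id⟩⟩

end Ext

end IsExtension

theorem IsExtension.injective {𝒜 : Type*} [Category* 𝒜] [Abelian 𝒜] {A B C : 𝒜}
    (h : IsExtension A B C) (hA : Injective A) (hC : Injective C) : Injective B := by
  obtain ⟨f, g, w, hS⟩ := h
  rw [injective_iff_hasInjectiveDimensionLT_one] at hA hC ⊢
  exact hS.hasInjectiveDimensionLT_X₂ 1 hA hC

theorem IsExtension.exists_injective {𝒜 : Type*} [Category* 𝒜] [Abelian 𝒜] [EnoughInjectives 𝒜]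
    (M : 𝒜) : ∃ I C, Injective I ∧ IsExtension M I C :=
  let P : InjectivePresentation M := Classical.arbitrary _
  ⟨_, _, P.injective, _, _, _, P.shortExact_shortComplex⟩

section Gorenstein

variable {𝒜 : Type*} [Category* 𝒜] [Abelian 𝒜] [HasExt.{w} 𝒜]

/-- `Ext^i(T, M) = 0` for every `T` in the test class `𝒯` and every `i > n`. -/
def ExtVanishesAbove (𝒯 : ObjectProperty 𝒜) (n : ℕ) (M : 𝒜) : Prop :=
  ∀ T, 𝒯 T → ∀ i, n ≤ i → Subsingleton (Abelian.Ext.{w} T M (i + 1))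

/-- A class of objects with vanishing higher `Ext` from `𝒯`, each of which is a quotient of an
injective object by an object of the class. -/
structure IsGorensteinInjectiveClass (𝒯 𝒳 : ObjectProperty 𝒜) : Prop where
  extVanishesAbove ⦃X : 𝒜⦄ : 𝒳 X → ExtVanishesAbove 𝒯 0 X
  exists_isExtension ⦃X : 𝒜⦄ : 𝒳 X → ∃ K I, 𝒳 K ∧ Injective I ∧ IsExtension K I X

/-- Gorenstein injective objects relative to the test class `𝒯`. They are defined coinductively,
as the members of the largest class satisfying `IsGorensteinInjectiveClass 𝒯`; unrolling this
produces the left half of a `Hom(𝒯, -)`-exact complex of injectives. -/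
def IsGorensteinInjective (𝒯 : ObjectProperty 𝒜) (M : 𝒜) : Prop :=
  ∃ 𝒳, IsGorensteinInjectiveClass 𝒯 𝒳 ∧ 𝒳 M

variable {𝒯 : ObjectProperty 𝒜} {A B C I K M N : 𝒜} {n : ℕ}

theorem extVanishesAbove_of_injective (_ : Injective I) : ExtVanishesAbove 𝒯 n I :=
  fun T _ i _ => subsingleton_ext_of_injective T I i

namespace IsExtension

theorem extVanishesAbove_middle (h : IsExtension A B C) (hA : ExtVanishesAbove 𝒯 n A)
    (hC : ExtVanishesAbove 𝒯 n C) : ExtVanishesAbove 𝒯 n B :=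
  fun T hT i hi => h.subsingleton_ext_middle (hA T hT i hi) (hC T hT i hi)

theorem extVanishesAbove_right (h : IsExtension A B C) (hA : ExtVanishesAbove 𝒯 (n + 1) A)
    (hB : ExtVanishesAbove 𝒯 n B) : ExtVanishesAbove 𝒯 n C :=
  fun T hT i hi => h.subsingleton_ext_right (hA T hT (i + 1) (by lia)) (hB T hT i hi)

theorem extVanishesAbove_left (h : IsExtension A B C) (hB : ExtVanishesAbove 𝒯 (n + 1) B)
    (hC : ExtVanishesAbove 𝒯 n C) : ExtVanishesAbove 𝒯 (n + 1) A := by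
  rintro T hT (_ | i) hi
  · exact absurd hi (by simp)
  · exact h.subsingleton_ext_left (hB T hT (i + 1) hi) (hC T hT i (by lia))

end IsExtension

theorem ExtVanishesAbove.mono {m : ℕ} (h : ExtVanishesAbove 𝒯 m M) (hmn : m ≤ n) :
    ExtVanishesAbove 𝒯 n M := fun T hT i hi => h T hT i (hmn.trans hi)

namespace IsGorensteinInjective

theorem extVanishesAbove (hM : IsGorensteinInjective 𝒯 M) : ExtVanishesAbove 𝒯 0 M :=
  let ⟨_, h𝒳, hM⟩ := hM
  h𝒳.extVanishesAbove hM

theorem exists_isExtension (hM : IsGorensteinInjective 𝒯 M) :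
    ∃ K I, IsGorensteinInjective 𝒯 K ∧ Injective I ∧ IsExtension K I M :=
  let ⟨𝒳, h𝒳, hM⟩ := hM
  let ⟨K, I, hK, hI, h⟩ := h𝒳.exists_isExtension hM
  ⟨K, I, ⟨𝒳, h𝒳, hK⟩, hI, h⟩

theorem of_isExtension (h : IsExtension K I M) (hK : IsGorensteinInjective 𝒯 K)
    (hI : Injective I) (hM : ExtVanishesAbove 𝒯 0 M) : IsGorensteinInjective 𝒯 M := by
  refine ⟨fun X => IsGorensteinInjective 𝒯 X ∨ X = M, ⟨?_, ?_⟩, Or.inr rfl⟩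
  · rintro X (hX | rfl)
    exacts [hX.extVanishesAbove, hM]
  · rintro X (hX | rfl)
    · obtain ⟨L, J, hL, hJ, hX⟩ := hX.exists_isExtension
      exact ⟨L, J, Or.inl hL, hJ, hX⟩
    · exact ⟨K, I, Or.inl hK, hI, h⟩

theorem of_injective (hI : Injective I) : IsGorensteinInjective 𝒯 I :=
  ⟨isInjective 𝒜, ⟨fun _ hX => extVanishesAbove_of_injective hX,
    fun X hX => ⟨0, X, inferInstance, hX, .of_iso (Iso.refl X)⟩⟩, hI⟩

theorem middle (h𝒯 : isInjective 𝒜 ≤ 𝒯) (h : IsExtension A B C) (hA : IsGorensteinInjective 𝒯 A)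
    (hC : IsGorensteinInjective 𝒯 C) : IsGorensteinInjective 𝒯 B := by
  refine ⟨fun Y => ∃ X Z, IsGorensteinInjective 𝒯 X ∧ IsGorensteinInjective 𝒯 Z ∧
    IsExtension X Y Z, ⟨?_, ?_⟩, A, C, hA, hC, h⟩
  · rintro Y ⟨X, Z, hX, hZ, hY⟩
    exact hY.extVanishesAbove_middle hX.extVanishesAbove hZ.extVanishesAbove
  · rintro Y ⟨X, Z, hX, hZ, hY⟩
    obtain ⟨K, I, hK, hI, hKIX⟩ := hX.exists_isExtension
    obtain ⟨L, J, hL, hJ, hLJZ⟩ := hZ.exists_isExtension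
    obtain ⟨P, hXPJ, hLPY⟩ := hY.exists_pullback hLJZ
    have hJPX : IsExtension J P X := hXPJ.swap (hX.extVanishesAbove J (h𝒯 J hJ) 0 le_rfl)
    obtain ⟨Q, hJQI, hKQP⟩ := hJPX.exists_pullback hKIX
    obtain ⟨Y', hY'QY, hKY'L⟩ := hLPY.exists_kernel_comp hKQP
    exact ⟨Y', Q, ⟨K, L, hK, hL, hKY'L⟩, hJQI.injective hJ hI, hY'QY⟩

theorem right (h𝒯 : isInjective 𝒜 ≤ 𝒯) (h : IsExtension A B C) (hA : IsGorensteinInjective 𝒯 A)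
    (hB : IsGorensteinInjective 𝒯 B) : IsGorensteinInjective 𝒯 C := by
  obtain ⟨K, J, hK, hJ, hKJB⟩ := hB.exists_isExtension
  obtain ⟨L, hLJC, hKLA⟩ := h.exists_kernel_comp hKJB
  exact of_isExtension hLJC (middle h𝒯 hKLA hK hA) hJ <|
    h.extVanishesAbove_right (hA.extVanishesAbove.mono zero_le_one) hB.extVanishesAbove

theorem left (h𝒯 : isInjective 𝒜 ≤ 𝒯) (h : IsExtension A B C) (hB : IsGorensteinInjective 𝒯 B)
    (hC : IsGorensteinInjective 𝒯 C) (hA : ExtVanishesAbove 𝒯 0 A) :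
    IsGorensteinInjective 𝒯 A := by
  obtain ⟨K, J, hK, hJ, hKJC⟩ := hC.exists_isExtension
  obtain ⟨P, hAPJ, hKPB⟩ := h.exists_pullback hKJC
  have hJPA : IsExtension J P A := hAPJ.swap (hA J (h𝒯 J hJ) 0 le_rfl)
  exact right h𝒯 hJPA (of_injective hJ) (middle h𝒯 hKPB hK hB)

theorem of_iso (h𝒯 : isInjective 𝒜 ≤ 𝒯) (e : M ≅ N)
    (hM : IsGorensteinInjective 𝒯 M) : IsGorensteinInjective 𝒯 N :=
  right h𝒯 (.of_iso e) (of_injective inferInstance) hM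

end IsGorensteinInjective

end Gorenstein

/-- `X` is an `n`-th cosyzygy of `M` by objects of `𝒳`: there is an exact sequence
`0 → M → G^0 → ⋯ → G^{n-1} → X → 0` with every `G^i` in `𝒳`. -/
inductive IsCosyzygy {𝒜 : Type*} [Category* 𝒜] [Abelian 𝒜] (𝒳 : ObjectProperty 𝒜) :
    ℕ → 𝒜 → 𝒜 → Prop
  | zero {M X : 𝒜} (e : M ≅ X) : IsCosyzygy 𝒳 0 M X
  | succ {n : ℕ} {M G M' X : 𝒜} (h : IsExtension M G M') (hG : 𝒳 G)
      (hX : IsCosyzygy 𝒳 n M' X) : IsCosyzygy 𝒳 (n + 1) M X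

namespace IsCosyzygy

variable {𝒜 : Type*} [Category* 𝒜] [Abelian 𝒜] {𝒳 𝒴 : ObjectProperty 𝒜} {M X : 𝒜} {n : ℕ}

theorem mono (h𝒳𝒴 : 𝒳 ≤ 𝒴) (h : IsCosyzygy 𝒳 n M X) : IsCosyzygy 𝒴 n M X := by
  induction h with
  | zero e => exact zero e
  | succ h hG _ ih => exact succ h (h𝒳𝒴 _ hG) ih

theorem exists_of_enoughInjectives [EnoughInjectives 𝒜] (n : ℕ) (M : 𝒜) :
    ∃ X, IsCosyzygy (isInjective 𝒜) n M X := by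
  induction n generalizing M with
  | zero => exact ⟨M, zero (Iso.refl M)⟩
  | succ n ih =>
    obtain ⟨I, C, hI, h⟩ := IsExtension.exists_injective M
    obtain ⟨X, hX⟩ := ih C
    exact ⟨X, succ h hI hX⟩

variable [HasExt.{w} 𝒜] {𝒯 : ObjectProperty 𝒜}

theorem extVanishesAbove_iff (h : IsCosyzygy 𝒳 n M X) (h𝒳 : 𝒳 ≤ ExtVanishesAbove 𝒯 0) :
    ExtVanishesAbove 𝒯 n M ↔ ExtVanishesAbove 𝒯 0 X := by
  induction h with
  | zero e =>
    have h0 (i) : ExtVanishesAbove 𝒯 i (0 : 𝒜) := extVanishesAbove_of_injective inferInstance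
    exact ⟨(IsExtension.of_iso e).extVanishesAbove_right (h0 1),
      (IsExtension.of_iso e).extVanishesAbove_middle (h0 0)⟩
  | succ h hG _ ih =>
    have hG := h𝒳 _ hG
    exact ⟨fun hM => ih.1 (h.extVanishesAbove_right hM (hG.mono (Nat.zero_le _))),
      fun hX => h.extVanishesAbove_left (hG.mono (Nat.zero_le _)) (ih.2 hX)⟩

end IsCosyzygy

section GorensteinDimension

variable {𝒜 : Type*} [Category* 𝒜] [Abelian 𝒜] [HasExt.{w} 𝒜]

/-- `M` has a coresolution of length `n` by Gorenstein injective objects relative to `𝒯`. -/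
def GorensteinInjectiveDimLE (𝒯 : ObjectProperty 𝒜) (n : ℕ) (M : 𝒜) : Prop :=
  ∃ X, IsGorensteinInjective 𝒯 X ∧ IsCosyzygy (IsGorensteinInjective 𝒯) n M X

variable {𝒯 : ObjectProperty 𝒜} {A B C I M X : 𝒜} {k n : ℕ}

namespace GorensteinInjectiveDimLE

theorem cons {G M' : 𝒜} (h : IsExtension M G M') (hG : IsGorensteinInjective 𝒯 G)
    (hM' : GorensteinInjectiveDimLE 𝒯 n M') : GorensteinInjectiveDimLE 𝒯 (n + 1) M :=
  let ⟨X, hX, hM'X⟩ := hM'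
  ⟨X, hX, .succ h hG hM'X⟩

theorem exists_isExtension (hM : GorensteinInjectiveDimLE 𝒯 (n + 1) M) :
    ∃ G M', IsGorensteinInjective 𝒯 G ∧ GorensteinInjectiveDimLE 𝒯 n M' ∧
      IsExtension M G M' := by
  obtain ⟨X, hX, _ | ⟨h, hG, hM'X⟩⟩ := hM
  exact ⟨_, _, hG, ⟨X, hX, hM'X⟩, h⟩

theorem extVanishesAbove (hM : GorensteinInjectiveDimLE 𝒯 n M) : ExtVanishesAbove 𝒯 n M :=
  let ⟨_, hX, hMX⟩ := hM
  (hMX.extVanishesAbove_iff fun _ hG => hG.extVanishesAbove).2 hX.extVanishesAbove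

theorem zero_iff (h𝒯 : isInjective 𝒜 ≤ 𝒯) :
    GorensteinInjectiveDimLE 𝒯 0 M ↔ IsGorensteinInjective 𝒯 M := by
  refine ⟨?_, fun hM => ⟨M, hM, .zero (Iso.refl M)⟩⟩
  rintro ⟨X, hX, ⟨e⟩⟩
  exact hX.of_iso h𝒯 e.symm

theorem isGorensteinInjective (h𝒯 : isInjective 𝒜 ≤ 𝒯) (hk : GorensteinInjectiveDimLE 𝒯 k M)
    (hM : ExtVanishesAbove 𝒯 0 M) : IsGorensteinInjective 𝒯 M := by
  induction k generalizing M with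
  | zero => exact (zero_iff h𝒯).1 hk
  | succ k ih =>
    obtain ⟨G, M', hG, hM', h⟩ := hk.exists_isExtension
    have hM'_ext := h.extVanishesAbove_right (hM.mono zero_le_one) hG.extVanishesAbove
    exact .left h𝒯 h hG (ih hM' hM'_ext) hM

theorem middle (h𝒯 : isInjective 𝒜 ≤ 𝒯) (h : IsExtension A B C)
    (hA : GorensteinInjectiveDimLE 𝒯 n A) (hC : IsGorensteinInjective 𝒯 C) :
    GorensteinInjectiveDimLE 𝒯 n B := by
  cases n with
  | zero => exact (zero_iff h𝒯).2 (.middle h𝒯 h ((zero_iff h𝒯).1 hA) hC)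
  | succ n =>
    obtain ⟨G, A', hG, hA', hAGA'⟩ := hA.exists_isExtension
    obtain ⟨P, hBPA', hGPC⟩ := h.exists_pushout hAGA'
    exact cons hBPA' (.middle h𝒯 hGPC hG hC) hA'

theorem right (h𝒯 : isInjective 𝒜 ≤ 𝒯) (h : IsExtension A B C) (hA : IsGorensteinInjective 𝒯 A)
    (hB : GorensteinInjectiveDimLE 𝒯 n B) : GorensteinInjectiveDimLE 𝒯 n C := by
  cases n with
  | zero => exact (zero_iff h𝒯).2 (.right h𝒯 h hA ((zero_iff h𝒯).1 hB))
  | succ n =>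
    obtain ⟨G, B', hG, hB', hBGB'⟩ := hB.exists_isExtension
    obtain ⟨Q, hAGQ, hCQB'⟩ := h.exists_cokernel_comp hBGB'
    exact cons hCQB' (.right h𝒯 hAGQ hA hG) hB'

theorem pred_of_isExtension (h𝒯 : isInjective 𝒜 ≤ 𝒯) (h : IsExtension M I C) (hI : Injective I)
    (hM : GorensteinInjectiveDimLE 𝒯 k M) : GorensteinInjectiveDimLE 𝒯 (k - 1) C := by
  cases k with
  | zero => exact right h𝒯 h ((zero_iff h𝒯).1 hM) ((zero_iff h𝒯).2 (.of_injective hI))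
  | succ k =>
    obtain ⟨G, M', hG, hM', hMGM'⟩ := hM.exists_isExtension
    obtain ⟨P, hGPC, hIPM'⟩ := hMGM'.exists_pushout h
    have hM'PI : IsExtension M' P I := hIPM'.swap (subsingleton_ext_of_injective M' I 0)
    exact right h𝒯 hGPC hG (middle h𝒯 hM'PI hM' (.of_injective hI))

theorem sub_of_isCosyzygy (h𝒯 : isInjective 𝒜 ≤ 𝒯) (h : IsCosyzygy (isInjective 𝒜) n M X)
    (hM : GorensteinInjectiveDimLE 𝒯 k M) : GorensteinInjectiveDimLE 𝒯 (k - n) X := by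
  induction h generalizing k with
  | zero e => exact right h𝒯 (.of_iso e) (.of_injective inferInstance) hM
  | @succ n _ _ _ _ h hG _ ih =>
    have := ih (pred_of_isExtension h𝒯 h hG hM)
    rwa [Nat.sub_sub, Nat.add_comm 1 n] at this

theorem tfae [EnoughInjectives 𝒜] (h𝒯 : isInjective 𝒜 ≤ 𝒯) (hM : GorensteinInjectiveDimLE 𝒯 k M)
    (n : ℕ) :
    [GorensteinInjectiveDimLE 𝒯 n M,
      ExtVanishesAbove 𝒯 n M,
      ∀ X, IsCosyzygy (isInjective 𝒜) n M X → IsGorensteinInjective 𝒯 X].TFAE := by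
  tfae_have 1 → 2 := extVanishesAbove
  tfae_have 2 → 3 := fun hn X hX =>
    isGorensteinInjective h𝒯 (sub_of_isCosyzygy h𝒯 hX hM) <|
      (hX.extVanishesAbove_iff fun _ hI => extVanishesAbove_of_injective hI).1 hn
  tfae_have 3 → 1 := fun hn =>
    let ⟨X, hX⟩ := IsCosyzygy.exists_of_enoughInjectives n M
    ⟨X, hn X hX, hX.mono fun _ hI => .of_injective hI⟩
  tfae_finish

end GorensteinInjectiveDimLE

end GorensteinDimension

section Modules

variable {R} {A B C E : ModuleCat.{u} R} {f : A →ₗ[R] B} {g : B →ₗ[R] C}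

theorem extVanish_succ_iff (n : ℕ) (N M : ModuleCat.{u} R) :
    ExtVanish R (n + 1) N M ↔ Subsingleton (Abelian.Ext.{u} N M (n + 1)) := by
  have P : ProjectiveResolution N := (HasProjectiveResolution.out (Z := N)).some
  have exact_iff : ExtVanish R (n + 1) N M ↔ ∀ f : P.complex.X (n + 1) ⟶ M,
      P.complex.d (n + 2) (n + 1) ≫ f = 0 → ∃ g : P.complex.X n ⟶ M,
        P.complex.d (n + 1) n ≫ g = f := by
    rw [ExtVanish, ← ModuleCat.isZero_iff_subsingleton, (P.isoExt (n + 1) M).isZero_iff,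
      ← HomologicalComplex.exactAt_iff_isZero_homology,
      HomologicalComplex.exactAt_iff' _ n (n + 1) (n + 2) (by simp) (by simp),
      ShortComplex.moduleCat_exact_iff]
    rfl
  rw [exact_iff]
  constructor
  · intro h
    refine subsingleton_of_forall_eq 0 fun α => ?_
    obtain ⟨f, hf, rfl⟩ := P.extMk_surjective α (n + 2) rfl
    exact (P.extMk_eq_zero_iff f (n + 2) rfl hf n rfl).2 (h f hf)
  · intro h f hf
    exact (P.extMk_eq_zero_iff f (n + 2) rfl hf n rfl).1 (Subsingleton.elim _ _)

theorem extVanishesAbove_iff_forall_extVanish {𝒯 : ModuleCat.{u} R → Prop} {n : ℕ}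
    {M : ModuleCat.{u} R} :
    ExtVanishesAbove 𝒯 n M ↔ ∀ T, 𝒯 T → ∀ i, n + 1 ≤ i → ExtVanish R i T M := by
  refine forall₂_congr fun T _ => ⟨fun h i hi => ?_, fun h i hi => ?_⟩
  · obtain ⟨i, rfl⟩ := Nat.exists_eq_add_of_le' hi
    exact (extVanish_succ_iff (i + n) T M).2 (h _ (Nat.le_add_left n i))
  · exact (extVanish_succ_iff i T M).1 (h _ (Nat.succ_le_succ hi))

theorem weakInjective_of_injective (hE : Module.Injective R E) : WeakInjective R E :=
  have : Injective E := (Module.injective_iff_injective_object R E).1 hE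
  fun N _ => (extVanish_succ_iff 0 N E).2 (subsingleton_ext_of_injective N E 0)

namespace ShortExactSeq

theorem shortExact (h : ShortExactSeq R A B C f g) :
    (ModuleCat.shortComplexOfCompEqZero f g h.2.2.linearMap_comp_eq_zero).ShortExact :=
  ModuleCat.shortComplex_shortExact _ h.2.2 h.1 h.2.1

theorem isExtension (h : ShortExactSeq R A B C f g) : IsExtension A B C :=
  ⟨_, _, _, h.shortExact⟩

theorem exact_comp_of_exact (h : ShortExactSeq R A B C f g) (T : ModuleCat.{u} R) :
    Function.Exact (fun φ : T →ₗ[R] A => f.comp φ) (fun φ : T →ₗ[R] B => g.comp φ) := by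
  have : Mono (ModuleCat.shortComplexOfCompEqZero f g h.2.2.linearMap_comp_eq_zero).f :=
    h.shortExact.mono_f
  intro φ
  constructor
  · intro hφ
    let ψ := h.shortExact.exact.lift (ModuleCat.ofHom φ) (ModuleCat.hom_ext hφ)
    exact ⟨ψ.hom, congrArg ModuleCat.Hom.hom (h.shortExact.exact.lift_f _ _)⟩
  · rintro ⟨ψ, rfl⟩
    exact congrArg (LinearMap.comp · ψ) h.2.2.linearMap_comp_eq_zero

theorem surjective_comp (h : ShortExactSeq R A B C f g) {T : ModuleCat.{u} R}
    (hT : Subsingleton (Abelian.Ext.{u} T A 1)) :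
    Function.Surjective (fun φ : T →ₗ[R] B => g.comp φ) := fun φ =>
  let ⟨ψ, hψ⟩ := exists_lift_of_subsingleton_ext h.shortExact hT (ModuleCat.ofHom φ)
  ⟨ψ.hom, congrArg ModuleCat.Hom.hom hψ⟩

theorem of_exact (h : Function.Exact f g) :
    ShortExactSeq R (ModuleCat.of R (LinearMap.ker f)) A (ModuleCat.of R (LinearMap.ker g))
      (LinearMap.ker f).subtype (f.codRestrict (LinearMap.ker g) h.apply_apply_eq_zero) := by
  refine ⟨Subtype.val_injective, fun ⟨y, hy⟩ => ?_, fun x => ?_⟩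
  · obtain ⟨x, rfl⟩ := (h y).1 hy
    exact ⟨x, rfl⟩
  · exact Subtype.ext_iff.trans (LinearMap.exact_subtype_ker_map f x)

end ShortExactSeq

theorem IsExtension.exists_shortExactSeq (h : IsExtension A B C) :
    ∃ (f : A →ₗ[R] B) (g : B →ₗ[R] C), ShortExactSeq R A B C f g :=
  let ⟨f, g, _, hS⟩ := h
  ⟨f.hom, g.hom, hS.moduleCat_injective_f, hS.moduleCat_surjective_g,
    (ShortComplex.ShortExact.moduleCat_exact_iff_function_exact _).1 hS.exact⟩

theorem exists_int_chain {α : Type*} {r : α → α → Prop} {p q : α → Prop}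
    (hpq : ∀ x, p x → q x) (hp : ∀ x, p x → ∃ y, p y ∧ r y x) (hq : ∀ x, q x → ∃ y, q y ∧ r x y)
    {x : α} (hx : p x) (m : ℤ) :
    ∃ Z : ℤ → α, Z m = x ∧ ∀ n, q (Z n) ∧ r (Z n) (Z (n + 1)) := by
  choose! pred hpred using hp
  choose! succ hsucc using hq
  have hp_iterate (k : ℕ) : p (pred^[k] x) :=
    Function.Iterate.rec p hx (fun y hy => (hpred y hy).1) k
  have hq_iterate (k : ℕ) : q (succ^[k] x) :=
    Function.Iterate.rec q (hpq x hx) (fun y hy => (hsucc y hy).1) k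
  let Z : ℤ → α
    | Int.ofNat k => succ^[k] x
    | Int.negSucc k => pred^[k + 1] x
  have hZ (n : ℤ) : q (Z n) ∧ r (Z n) (Z (n + 1)) := by
    match n with
    | Int.ofNat k =>
      refine ⟨hq_iterate k, ?_⟩
      change r _ (succ^[k + 1] x)
      rw [Function.iterate_succ_apply']
      exact (hsucc _ (hq_iterate k)).2
    | Int.negSucc k =>
      refine ⟨hpq _ (hp_iterate (k + 1)), ?_⟩
      have hZ_succ : Z (Int.negSucc k + 1) = pred^[k] x := by cases k <;> rfl
      rw [hZ_succ]
      change r (pred^[k + 1] x) _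
      rw [Function.iterate_succ_apply']
      exact (hpred _ (hp_iterate k)).2
  refine ⟨fun n => Z (n - m), congrArg Z (sub_self m), fun n => ⟨(hZ _).1, ?_⟩⟩
  have hr := (hZ (n - m)).2
  rwa [← add_sub_right_comm] at hr

theorem exact_comp_comp {X₁ X₂ X₃ Y₁ Y₂ : Type*} [Zero X₃] [Zero Y₂] {π₁ : X₁ → Y₁}
    {ι₁ : Y₁ → X₂} {π₂ : X₂ → Y₂} {ι₂ : Y₂ → X₃} (hπ₁ : Function.Surjective π₁)
    (h : Function.Exact ι₁ π₂) (hι₂ : Function.Injective ι₂) (h0 : ι₂ 0 = 0) :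
    Function.Exact (ι₁ ∘ π₁) (ι₂ ∘ π₂) := by
  intro y
  rw [hπ₁.range_comp, ← h y, Function.comp_apply, ← hι₂.eq_iff, h0]

theorem isTotallyAcyclicInjComplex_of_shortExactSeq {𝒯 : ModuleCat.{u} R → Prop}
    {Z I : ℤ → ModuleCat.{u} R} {ι : ∀ n, Z n →ₗ[R] I n} {π : ∀ n, I n →ₗ[R] Z (n + 1)}
    (hs : ∀ n, ShortExactSeq R (Z n) (I n) (Z (n + 1)) (ι n) (π n))
    (hI : ∀ n, Module.Injective R (I n))
    (hZ : ∀ n T, 𝒯 T → Subsingleton (Abelian.Ext.{u} T (Z n) 1)) :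
    IsTotallyAcyclicInjComplex R 𝒯 I (fun n => (ι (n + 1)).comp (π n)) := by
  refine ⟨hI, fun n => ?_, fun T hT n => ?_⟩
  · exact (hs n).2.1.comp_exact_iff_exact.2 ((hs (n + 1 + 1)).1.comp_exact_iff_exact.2
      (hs (n + 1)).2.2)
  · exact exact_comp_comp ((hs n).surjective_comp (hZ n T hT))
      ((hs (n + 1)).exact_comp_of_exact T) (hs (n + 1 + 1)).1.injective_linearMapComp_left
      (LinearMap.comp_zero _)

theorem IsGorensteinInjective.gorensteinRelInjective {𝒯 : ModuleCat.{u} R → Prop}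
    {M : ModuleCat.{u} R} (hM : IsGorensteinInjective 𝒯 M) : GorensteinRelInjective R 𝒯 M := by
  obtain ⟨Z, rfl, hZ⟩ := exists_int_chain
    (r := fun K X : ModuleCat.{u} R => ∃ I, Injective I ∧ IsExtension K I X)
    (p := IsGorensteinInjective 𝒯) (q := ExtVanishesAbove 𝒯 0)
    (fun X hX => hX.extVanishesAbove)
    (fun X hX =>
      let ⟨K, I, hK, h⟩ := hX.exists_isExtension
      ⟨K, hK, I, h⟩)
    (fun X hX =>
      let ⟨I, C, hI, h⟩ := IsExtension.exists_injective X
      ⟨C, h.extVanishesAbove_right (hX.mono zero_le_one) (extVanishesAbove_of_injective hI),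
        I, hI, h⟩)
    hM 1
  choose I hI hs using fun n => (hZ n).2
  choose ι π hs using fun n => (hs n).exists_shortExactSeq
  exact ⟨I, _, π 0, isTotallyAcyclicInjComplex_of_shortExactSeq hs
    (fun n => (Module.injective_iff_injective_object R _).2 (hI n))
    (fun n T hT => (hZ n).1 T hT 0 le_rfl), (hs 0).2.1,
    (hs (-1)).2.1.comp_exact_iff_exact.2 (hs 0).2.2⟩

theorem IsTotallyAcyclicInjComplex.extVanishesAbove_ker {𝒯 : ModuleCat.{u} R → Prop}
    {I : ℤ → ModuleCat.{u} R} {d : ∀ n : ℤ, I n →ₗ[R] I (n + 1)}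
    (h : IsTotallyAcyclicInjComplex R 𝒯 I d) (n : ℤ) :
    ExtVanishesAbove 𝒯 0 (ModuleCat.of R (LinearMap.ker (d n))) := by
  rintro T hT i -
  have hs (m : ℤ) := ShortExactSeq.of_exact (h.2.1 m)
  have hI (m : ℤ) : Injective (I m) :=
    (Module.injective_iff_injective_object R (I m)).1 (h.1 m)
  induction i generalizing n with
  | zero =>
    refine subsingleton_ext_one_of_forall_lift (hs n).shortExact
      (subsingleton_ext_of_injective T (I n) 0) fun φ => ?_
    obtain ⟨ψ, hψ⟩ := (h.2.2 T hT n ((LinearMap.ker (d (n + 1))).subtype.comp φ.hom)).1 <|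
      LinearMap.ext fun x => (φ.hom x).2
    exact ⟨ModuleCat.ofHom ψ, ModuleCat.hom_ext <|
      (LinearMap.cancel_left (LinearMap.ker (d (n + 1))).subtype_injective).1 hψ⟩
  | succ i ih =>
    exact (hs n).isExtension.subsingleton_ext_left
      (subsingleton_ext_of_injective T (I n) (i + 1)) (ih (n + 1))

theorem gorensteinRelInjective_iff {𝒯 : ModuleCat.{u} R → Prop} {M : ModuleCat.{u} R} :
    GorensteinRelInjective R 𝒯 M ↔ IsGorensteinInjective 𝒯 M := by
  refine ⟨?_, IsGorensteinInjective.gorensteinRelInjective⟩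
  rintro ⟨I, d, π, h, hπ, hdπ⟩
  have hI (n) : Injective (I n) :=
    (Module.injective_iff_injective_object R (I n)).1 (h.1 n)
  let Z (n : ℤ) : ModuleCat.{u} R := ModuleCat.of R (LinearMap.ker (d n))
  have hZ_class : IsGorensteinInjectiveClass 𝒯 (fun X => ∃ n, X = Z n) := by
    constructor
    · rintro _ ⟨n, rfl⟩
      exact h.extVanishesAbove_ker n
    · rintro _ ⟨n, rfl⟩
      obtain ⟨m, rfl⟩ : ∃ m, n = m + 1 := ⟨n - 1, by ring⟩
      exact ⟨Z m, I m, ⟨m, rfl⟩, hI m, (ShortExactSeq.of_exact (h.2.1 m)).isExtension⟩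
  have hπ_ker : Function.Exact (LinearMap.ker (d 0)).subtype π := fun x => by
    have hd : Function.Exact (d (-1)) (d 0) := h.2.1 (-1)
    rw [hdπ x, ← hd x]
    exact LinearMap.exact_subtype_ker_map (d 0) x
  have hs : IsExtension (Z 0) (I 0) M :=
    ShortExactSeq.isExtension ⟨Subtype.val_injective, hπ, hπ_ker⟩
  exact .of_isExtension hs ⟨_, hZ_class, 0, rfl⟩ (hI 0) <|
    hs.extVanishesAbove_right ((h.extVanishesAbove_ker 0).mono zero_le_one)
      (extVanishesAbove_of_injective (hI 0))

section Coresolution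

variable {𝒳 : ModuleCat.{u} R → Prop} {M N : ModuleCat.{u} R} {n : ℕ}

theorem IsFiniteCoresolution.isCosyzygy {G : ℕ → ModuleCat.{u} R}
    {d : ∀ i, G i →ₗ[R] G (i + 1)} {ε : M →ₗ[R] G 0} (h : IsFiniteCoresolution R M n G d ε)
    (hG : ∀ i < n, 𝒳 (G i)) : IsCosyzygy 𝒳 n M (G n) := by
  obtain ⟨hε, hεd, hd, hzero⟩ := h
  induction n generalizing M G with
  | zero =>
    have hε_bij : Function.Bijective ε := ⟨hε, fun x => (hεd x).1 (hzero 1 one_pos _)⟩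
    exact .zero (LinearEquiv.ofBijective ε hε_bij).toModuleIso
  | succ n ih =>
    have hs : ShortExactSeq R M (G 0) (ModuleCat.of R (LinearMap.ker (d 1))) ε
        ((d 0).codRestrict _ (hd 0).apply_apply_eq_zero) := by
      refine ⟨hε, (ShortExactSeq.of_exact (hd 0)).2.1, fun x => ?_⟩
      exact Subtype.ext_iff.trans (hεd x)
    exact .succ hs.isExtension (hG 0 n.succ_pos) <|
      ih (G := fun i => G (i + 1)) (d := fun i => d (i + 1)) (fun i hi => hG (i + 1) (by lia))
        Subtype.val_injective (LinearMap.exact_subtype_ker_map _) (fun i => hd (i + 1))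
        (fun i hi => hzero (i + 1) (by lia))

theorem exists_isFiniteCoresolution_zero (e : M ≃ₗ[R] N) :
    ∃ (G : ℕ → ModuleCat.{u} R) (d : ∀ i, G i →ₗ[R] G (i + 1)) (ε : M →ₗ[R] G 0),
      IsFiniteCoresolution R M 0 G d ε ∧ G 0 = N := by
  let G : ℕ → ModuleCat.{u} R
    | 0 => N
    | _ + 1 => ModuleCat.of R PUnit
  have hG (i) (x : G (i + 1)) : x = 0 := rfl
  refine ⟨G, fun _ => 0, e.toLinearMap, ⟨e.injective, ?_, ?_, ?_⟩, rfl⟩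
  · exact (LinearMap.exact_zero_iff_surjective _ _).2 e.surjective
  · exact fun i x => iff_of_true rfl ⟨0, (hG i x).symm⟩
  · rintro (_ | i) hi
    exacts [absurd hi (lt_irrefl 0), hG i]

theorem IsFiniteCoresolution.exists_cons {f : M →ₗ[R] A} {g : A →ₗ[R] N}
    (hs : ShortExactSeq R M A N f g) {G : ℕ → ModuleCat.{u} R}
    {d : ∀ i, G i →ₗ[R] G (i + 1)} {ε : N →ₗ[R] G 0} (h : IsFiniteCoresolution R N n G d ε) :
    ∃ (G' : ℕ → ModuleCat.{u} R) (d' : ∀ i, G' i →ₗ[R] G' (i + 1)) (ε' : M →ₗ[R] G' 0),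
      IsFiniteCoresolution R M (n + 1) G' d' ε' ∧ G' 0 = A ∧ ∀ i, G' (i + 1) = G i := by
  let G' : ℕ → ModuleCat.{u} R
    | 0 => A
    | i + 1 => G i
  let d' : ∀ i, G' i →ₗ[R] G' (i + 1)
    | 0 => ε.comp g
    | i + 1 => d i
  refine ⟨G', d', f, ⟨hs.1, ?_, ?_, ?_⟩, rfl, fun _ => rfl⟩
  · exact h.1.comp_exact_iff_exact.2 hs.2.2
  · rintro (_ | i)
    exacts [hs.2.1.comp_exact_iff_exact.2 h.2.1, h.2.2.1 i]
  · rintro (_ | i) hi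
    exacts [absurd hi (Nat.not_lt_zero _), h.2.2.2 i (Nat.lt_of_succ_lt_succ hi)]

theorem IsCosyzygy.exists_isFiniteCoresolution (h : IsCosyzygy 𝒳 n M N) :
    ∃ (G : ℕ → ModuleCat.{u} R) (d : ∀ i, G i →ₗ[R] G (i + 1)) (ε : M →ₗ[R] G 0),
      IsFiniteCoresolution R M n G d ε ∧ (∀ i < n, 𝒳 (G i)) ∧ G n = N := by
  induction h with
  | zero e =>
    obtain ⟨G, d, ε, h, rfl⟩ := exists_isFiniteCoresolution_zero e.toLinearEquiv
    exact ⟨G, d, ε, h, fun i hi => absurd hi (Nat.not_lt_zero i), rfl⟩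
  | succ hs hA _ ih =>
    obtain ⟨G, d, ε, h, hG, rfl⟩ := ih
    obtain ⟨f, g, hs⟩ := hs.exists_shortExactSeq
    obtain ⟨G', d', ε', h', rfl, hG'⟩ := h.exists_cons hs
    refine ⟨G', d', ε', h', ?_, hG' _⟩
    rintro (_ | i) hi
    · exact hA
    · rw [hG']
      exact hG i (Nat.lt_of_succ_lt_succ hi)

end Coresolution

end Modules

/-- `M` has a coresolution of length `n` by modules that are Gorenstein injective relative to
`𝒯`; the test class of weak injective modules gives `GwidLE`, that of injective modules
`GidLE`. -/
def GorensteinRelInjectiveDimLE (𝒯 : ModuleCat.{u} R → Prop) (M : ModuleCat.{u} R) (n : ℕ) :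
    Prop :=
  ∃ (G : ℕ → ModuleCat.{u} R) (d : ∀ i, G i →ₗ[R] G (i + 1)) (ε : M →ₗ[R] G 0),
    IsFiniteCoresolution R M n G d ε ∧ ∀ i, GorensteinRelInjective R 𝒯 (G i)

theorem gorensteinRelInjectiveDimLE_iff {𝒯 : ModuleCat.{u} R → Prop} {M : ModuleCat.{u} R}
    {n : ℕ} : GorensteinRelInjectiveDimLE R 𝒯 M n ↔ GorensteinInjectiveDimLE 𝒯 n M := by
  constructor
  · rintro ⟨G, d, ε, h, hG⟩
    simp only [gorensteinRelInjective_iff] at hG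
    exact ⟨G n, hG n, h.isCosyzygy fun i _ => hG i⟩
  · rintro ⟨X, hX, hMX⟩
    obtain ⟨G, d, ε, h, hG, rfl⟩ := hMX.exists_isFiniteCoresolution
    refine ⟨G, d, ε, h, fun i => gorensteinRelInjective_iff.2 ?_⟩
    rcases lt_trichotomy i n with hi | rfl | hi
    · exact hG i hi
    · exact hX
    · have : Subsingleton (G i) := subsingleton_of_forall_eq 0 (h.2.2.2 i hi)
      exact .of_injective (ModuleCat.isZero_of_subsingleton (G i)).injective

theorem forall_isCosyzygy_injective_iff {𝒳 : ModuleCat.{u} R → Prop} {M : ModuleCat.{u} R}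
    {n : ℕ} :
    (∀ X, IsCosyzygy (isInjective (ModuleCat.{u} R)) n M X → 𝒳 X) ↔
      ∀ (G : ℕ → ModuleCat.{u} R) (d : ∀ i, G i →ₗ[R] G (i + 1)) (ε : M →ₗ[R] G 0),
        IsFiniteCoresolution R M n G d ε → (∀ i < n, Module.Injective R (G i)) → 𝒳 (G n) := by
  constructor
  · intro h G d ε hG hinj
    exact h _ (hG.isCosyzygy fun i hi => (Module.injective_iff_injective_object R _).1 (hinj i hi))
  · intro h X hX
    obtain ⟨G, d, ε, hG, hinj, rfl⟩ := hX.exists_isFiniteCoresolution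
    exact h G d ε hG fun i hi => (Module.injective_iff_injective_object R _).2 (hinj i hi)

theorem gwidLE_iff_general (𝒯 : ModuleCat.{u} R → Prop)
    (h𝒯 : ∀ E : ModuleCat.{u} R, Module.Injective R E → 𝒯 E) (M : ModuleCat.{u} R)
    (hfin : ∃ k : ℕ, GorensteinRelInjectiveDimLE R 𝒯 M k) (n : ℕ) :
    (GorensteinRelInjectiveDimLE R 𝒯 M n ↔
      ∀ T : ModuleCat.{u} R, 𝒯 T → ∀ i : ℕ, n + 1 ≤ i → ExtVanish R i T M) ∧
    (GorensteinRelInjectiveDimLE R 𝒯 M n ↔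
      ∀ (G : ℕ → ModuleCat.{u} R) (d : ∀ i, G i →ₗ[R] G (i + 1)) (ε : M →ₗ[R] G 0),
        IsFiniteCoresolution R M n G d ε → (∀ i < n, Module.Injective R (G i)) →
        GorensteinRelInjective R 𝒯 (G n)) := by
  obtain ⟨k, hk⟩ := hfin
  have h𝒯' : isInjective (ModuleCat.{u} R) ≤ 𝒯 := fun E hE =>
    h𝒯 E ((Module.injective_iff_injective_object R E).2 hE)
  have tfae := GorensteinInjectiveDimLE.tfae h𝒯' ((gorensteinRelInjectiveDimLE_iff R).1 hk) n
  simp only [gorensteinRelInjectiveDimLE_iff, gorensteinRelInjective_iff,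
    ← extVanishesAbove_iff_forall_extVanish, ← forall_isCosyzygy_injective_iff]
  exact ⟨tfae.out 0 1, tfae.out 0 2⟩

/-- For `M` of finite Gorenstein weak injective dimension: `Gwid_R M ≤ n` iff
`Ext^i_R(W, M) = 0` for every weak injective `W` and `i ≥ n + 1`, iff for every exact
sequence `0 → M → I^0 → ⋯ → I^{n-1} → C^n → 0` with the `I^i` injective, `C^n` is
Gorenstein weak injective. -/
theorem gwidLE_iff (M : ModuleCat.{u} R) (hfin : ∃ k : ℕ, GwidLE R M k) (n : ℕ) :
    (GwidLE R M n ↔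
      ∀ W : ModuleCat.{u} R, WeakInjective R W → ∀ i : ℕ, n + 1 ≤ i → ExtVanish R i W M) ∧
    (GwidLE R M n ↔
      ∀ (G : ℕ → ModuleCat.{u} R) (d : ∀ i, G i →ₗ[R] G (i + 1)) (ε : M →ₗ[R] G 0),
        IsFiniteCoresolution R M n G d ε → (∀ i < n, Module.Injective R (G i)) →
        GorensteinWeakInjective R (G n)) :=
  gwidLE_iff_general R (WeakInjective R) (fun _ => weakInjective_of_injective) M hfin n
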